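/- Let l₁, l₂ be positive reals. If one of the following three conditions holds: (a) λ₂ < μ₂l₂ and λ₁p₁ + λ₂ > μ₁l₁p₁ + μ₂l₂; (b) λ₁ < μ₁l₁ and λ₁ + λ₂p₂ > μ₁l₁ + μ₂l₂p₂; (c) λ₁ > μ₁l₁ and λ₂ > μ₂l₂; then there exists exactly one invariant distribution of the random walk (m̄_l(t)), i.e., exactly one probability distribution π on ℕ×ℕ satisfying the balance equations. -/

import Mathlib

/-- π is an invariant (stationary) probability distribution of the random walk (m̄_l(t)):
nonnegative, sums to 1, and satisfies the balance equations. -/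
def IsInvariantDist (la1 la2 mu1 mu2 l1 l2 p1 p2 : ℝ) (π : ℕ × ℕ → ℝ) : Prop :=
  (∀ m, 0 ≤ π m) ∧ (∑' m : ℕ × ℕ, π m = 1) ∧
  ∀ m1 m2 : ℕ,
    π (m1, m2) * (mu1 * l1 + mu2 * l2
        + (la1 + p2 * la2 * (if m2 = 0 then 1 else 0)) * (if 0 < m1 then 1 else 0)
        + (la2 + p1 * la1 * (if m1 = 0 then 1 else 0)) * (if 0 < m2 then 1 else 0))
    = mu1 * l1 * π (m1 - 1, m2) * (if 0 < m1 then 1 else 0)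
      + mu2 * l2 * π (m1, m2 - 1) * (if 0 < m2 then 1 else 0)
      + (la1 + p2 * la2 * (if m2 = 0 then 1 else 0)) * π (m1 + 1, m2)
      + (la2 + p1 * la1 * (if m1 = 0 then 1 else 0)) * π (m1, m2 + 1)

/-
A chain with bounded jump rates has the same stationary laws as its uniformization, a discrete-time
chain. If two laws are stationary, the positive part `f` of their difference satisfies `f ≤ f p`;
both sides have the same finite total mass, so `f` is stationary, and by irreducibility it vanishes
everywhere or nowhere. The latter is impossible for the difference of two probability laws, which
gives uniqueness.

For existence, a cluster point of the Cesàro averages of the laws of the chain is stationary but may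
have lost mass. By Foster's criterion it does not vanish if some function `V` drops by a fixed
amount on average outside a finite set. In each of the three regimes the quadratic function
`V(m₁, m₂) = α m₁² + 2 β m₁ m₂ + γ m₂²` works: its drift is affine in the interior and on each axis,
and the weights can be chosen to make all the leading coefficients negative.
-/

open Filter Topology Relation
open scoped ENNReal NNReal

/-- Irreducibility of a nonnegative matrix, which may be a transition matrix or a matrix of jump
rates: any state leads to any other through finitely many positive entries. -/
def IsIrreducibleRate {S : Type*} (q : S → S → ℝ≥0∞) : Prop :=
  ∀ x y, ReflTransGen (fun u v => q u v ≠ 0) x y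

section StochasticKernel

variable {S : Type*} {p : S → PMF S}

lemma eq_of_le_of_tsum_le {f g : S → ℝ≥0∞} (hfg : f ≤ g) (hsum : ∑' x, g x ≤ ∑' x, f x)
    (hf : ∑' x, f x ≠ ∞) : f = g := by
  refine hfg.antisymm fun x => not_lt.1 fun hx => ?_
  exact hsum.not_gt (ENNReal.tsum_lt_tsum hf hfg hx)

lemma tsum_tsum_mul_kernel (p : S → PMF S) (f : S → ℝ≥0∞) :
    ∑' y, ∑' x, f x * p x y = ∑' x, f x := by
  rw [ENNReal.tsum_comm]
  simp only [ENNReal.tsum_mul_left, PMF.tsum_coe, mul_one]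

lemma tsum_mul_kernel_eq_of_le {f : S → ℝ≥0∞} (hf : ∑' x, f x ≠ ∞)
    (hle : ∀ y, ∑' x, f x * p x y ≤ f y) (y : S) : ∑' x, f x * p x y = f y := by
  refine congrFun (eq_of_le_of_tsum_le hle (tsum_tsum_mul_kernel p f).ge ?_) y
  rwa [tsum_tsum_mul_kernel]

lemma tsum_mul_kernel_eq_of_ge {f : S → ℝ≥0∞} (hf : ∑' x, f x ≠ ∞)
    (hge : ∀ y, f y ≤ ∑' x, f x * p x y) (y : S) : ∑' x, f x * p x y = f y :=
  (congrFun (eq_of_le_of_tsum_le hge (tsum_tsum_mul_kernel p f).le hf) y).symm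

lemma eq_zero_of_tsum_mul_kernel_eq (hp : IsIrreducibleRate fun x y => p x y) {f : S → ℝ≥0∞}
    (hf : ∀ y, ∑' x, f x * p x y = f y) {y : S} (hy : f y = 0) (x : S) : f x = 0 := by
  induction hp x y using ReflTransGen.head_induction_on with
  | refl => exact hy
  | head hxz _ hz =>
    have hterm := ENNReal.tsum_eq_zero.1 ((hf _).trans hz)
    exact (mul_eq_zero.1 (hterm _)).resolve_right hxz

lemma le_of_bind_eq (hp : IsIrreducibleRate fun x y => p x y) {π ρ : PMF S}
    (hπ : π.bind p = π) (hρ : ρ.bind p = ρ) : ⇑π ≤ ⇑ρ := by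
  set excess : S → ℝ≥0∞ := fun x => π x - ρ x
  have excess_sum : ∑' x, excess x ≠ ∞ :=
    ne_top_of_le_ne_top π.tsum_coe_ne_top (ENNReal.tsum_le_tsum fun _ => tsub_le_self)
  have excess_sub (y : S) : excess y ≤ ∑' x, excess x * p x y := by
    rw [tsub_le_iff_right]
    calc π y = ∑' x, π x * p x y := by rw [← PMF.bind_apply, hπ]
      _ ≤ ∑' x, (excess x + ρ x) * p x y := by gcongr; exact le_tsub_add
      _ = ∑' x, excess x * p x y + ∑' x, ρ x * p x y := by simp only [add_mul, ENNReal.tsum_add]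
      _ = ∑' x, excess x * p x y + ρ y := by rw [← PMF.bind_apply, hρ]
  have excess_stationary := tsum_mul_kernel_eq_of_ge excess_sum excess_sub
  by_contra hle
  obtain ⟨x, hx⟩ : ∃ x, ρ x < π x := by simpa [Pi.le_def] using hle
  have hlt (y : S) : ρ y < π y := by
    by_contra hy
    have := eq_zero_of_tsum_mul_kernel_eq hp excess_stationary (tsub_eq_zero_of_le (not_lt.1 hy)) x
    exact hx.not_ge (tsub_eq_zero_iff_le.1 this)
  have := ENNReal.tsum_lt_tsum ρ.tsum_coe_ne_top (fun y => (hlt y).le) hx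
  simp only [PMF.tsum_coe, lt_self_iff_false] at this

theorem eq_of_bind_eq (hp : IsIrreducibleRate fun x y => p x y) {π ρ : PMF S}
    (hπ : π.bind p = π) (hρ : ρ.bind p = ρ) : π = ρ :=
  DFunLike.coe_injective ((le_of_bind_eq hp hπ hρ).antisymm (le_of_bind_eq hp hρ hπ))

end StochasticKernel

section FosterCriterion

variable {S : Type*} {p : S → PMF S}

/-- The law after `n` steps of the Markov chain with transition kernel `p` started at `x₀`. -/
noncomputable def stepLaw (p : S → PMF S) (x₀ : S) : ℕ → PMF S
  | 0 => PMF.pure x₀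
  | n + 1 => (stepLaw p x₀ n).bind p

/-- The expected proportion of the first `n` steps which the chain started at `x₀` spends at `y`;
at `n = 0` this is the junk value `0` (from `∞ * 0`). -/
noncomputable def occupation (p : S → PMF S) (x₀ : S) (n : ℕ) (y : S) : ℝ≥0∞ :=
  (n : ℝ≥0∞)⁻¹ * ∑ k ∈ Finset.range n, stepLaw p x₀ k y

lemma tsum_bind_mul (π : PMF S) (p : S → PMF S) (V : S → ℝ≥0∞) :
    ∑' y, π.bind p y * V y = ∑' x, π x * ∑' y, p x y * V y := by
  simp only [PMF.bind_apply, ← ENNReal.tsum_mul_right, ← ENNReal.tsum_mul_left, mul_assoc]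
  exact ENNReal.tsum_comm

lemma sum_occupation_le_one (p : S → PMF S) (x₀ : S) (n : ℕ) (F : Finset S) :
    ∑ x ∈ F, occupation p x₀ n x ≤ 1 := by
  calc ∑ x ∈ F, occupation p x₀ n x
      = (n : ℝ≥0∞)⁻¹ * ∑ k ∈ Finset.range n, ∑ x ∈ F, stepLaw p x₀ k x := by
        simp only [occupation, ← Finset.mul_sum]
        rw [Finset.sum_comm]
    _ ≤ (n : ℝ≥0∞)⁻¹ * ∑ k ∈ Finset.range n, 1 := by
        gcongr with k
        exact (ENNReal.sum_le_tsum F).trans (stepLaw p x₀ k).tsum_coe.le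
    _ ≤ 1 := by simp

lemma tsum_occupation_mul_kernel_le (p : S → PMF S) (x₀ : S) (n : ℕ) (y : S) :
    ∑' x, occupation p x₀ n x * p x y ≤ occupation p x₀ n y + (n : ℝ≥0∞)⁻¹ := by
  calc ∑' x, occupation p x₀ n x * p x y
      = (n : ℝ≥0∞)⁻¹ * ∑ k ∈ Finset.range n, stepLaw p x₀ (k + 1) y := by
        simp only [occupation, stepLaw, PMF.bind_apply, mul_assoc, Finset.sum_mul,
          ENNReal.tsum_mul_left]
        rw [Summable.tsum_finsetSum fun _ _ => ENNReal.summable]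
    _ ≤ (n : ℝ≥0∞)⁻¹ * (∑ k ∈ Finset.range n, stepLaw p x₀ k y + stepLaw p x₀ n y) := by
        rw [← Finset.sum_range_succ, Finset.sum_range_succ']
        gcongr
        exact le_self_add
    _ ≤ occupation p x₀ n y + (n : ℝ≥0∞)⁻¹ := by
        rw [mul_add, occupation]
        gcongr
        exact mul_le_of_le_one_right' ((stepLaw p x₀ n).coe_le_one y)

lemma tsum_bind_mul_add_le_of_drift {V : S → ℝ≥0∞} {F : Finset S} {ε C : ℝ≥0∞}
    (hdrift : ∀ x, ∑' y, p x y * V y + ε ≤ V x + (F : Set S).indicator (fun _ => C) x)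
    (μ : PMF S) :
    ∑' y, μ.bind p y * V y + ε ≤ ∑' x, μ x * V x + (∑ x ∈ F, μ x) * C := by
  calc ∑' y, μ.bind p y * V y + ε
      = ∑' x, μ x * (∑' y, p x y * V y + ε) := by
        simp only [tsum_bind_mul, mul_add, ENNReal.tsum_add, ENNReal.tsum_mul_right, μ.tsum_coe,
          one_mul]
    _ ≤ ∑' x, μ x * (V x + (F : Set S).indicator (fun _ => C) x) :=
        ENNReal.tsum_le_tsum fun x => mul_le_mul_right (hdrift x) _
    _ = ∑' x, μ x * V x + (∑ x ∈ F, μ x) * C := by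
        simp only [mul_add, ENNReal.tsum_add, ← Set.indicator_mul_right, Finset.sum_mul]
        rw [sum_eq_tsum_indicator]

lemma tsum_stepLaw_mul_add_le_of_drift {V : S → ℝ≥0∞} {F : Finset S} {ε C : ℝ≥0∞}
    (hdrift : ∀ x, ∑' y, p x y * V y + ε ≤ V x + (F : Set S).indicator (fun _ => C) x)
    (x₀ : S) (n : ℕ) :
    ∑' x, stepLaw p x₀ n x * V x + n * ε ≤
      V x₀ + (∑ k ∈ Finset.range n, ∑ x ∈ F, stepLaw p x₀ k x) * C := by
  induction n with
  | zero => simp [stepLaw, PMF.pure_apply]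
  | succ n ih =>
    calc ∑' x, stepLaw p x₀ (n + 1) x * V x + (n + 1 : ℕ) * ε
        = (∑' y, (stepLaw p x₀ n).bind p y * V y + ε) + n * ε := by
          rw [stepLaw]; push_cast; ring
      _ ≤ (∑' x, stepLaw p x₀ n x * V x + (∑ x ∈ F, stepLaw p x₀ n x) * C) + n * ε :=
          add_le_add_left (tsum_bind_mul_add_le_of_drift hdrift _) _
      _ = (∑' x, stepLaw p x₀ n x * V x + n * ε) + (∑ x ∈ F, stepLaw p x₀ n x) * C := by ring
      _ ≤ V x₀ + (∑ k ∈ Finset.range n, ∑ x ∈ F, stepLaw p x₀ k x) * C +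
          (∑ x ∈ F, stepLaw p x₀ n x) * C := add_le_add_left ih _
      _ = _ := by rw [Finset.sum_range_succ, add_mul, add_assoc]

lemma le_sum_occupation {V : S → ℝ≥0∞} {F : Finset S} {ε C : ℝ≥0∞}
    (hdrift : ∀ x, ∑' y, p x y * V y + ε ≤ V x + (F : Set S).indicator (fun _ => C) x)
    (x₀ : S) {n : ℕ} (hn : n ≠ 0) :
    ε ≤ (n : ℝ≥0∞)⁻¹ * V x₀ + (∑ x ∈ F, occupation p x₀ n x) * C := by
  have hn₀ : (n : ℝ≥0∞) ≠ 0 := Nat.cast_ne_zero.2 hn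
  calc ε = (n : ℝ≥0∞)⁻¹ * (n * ε) := by
        rw [← mul_assoc, ENNReal.inv_mul_cancel hn₀ (ENNReal.natCast_ne_top n), one_mul]
    _ ≤ (n : ℝ≥0∞)⁻¹ * (V x₀ + (∑ k ∈ Finset.range n, ∑ x ∈ F, stepLaw p x₀ k x) * C) := by
        gcongr
        exact le_add_self.trans (tsum_stepLaw_mul_add_le_of_drift hdrift x₀ n)
    _ = (n : ℝ≥0∞)⁻¹ * V x₀ + (∑ x ∈ F, occupation p x₀ n x) * C := by
        simp only [occupation, ← Finset.mul_sum]
        rw [Finset.sum_comm, mul_add, mul_assoc]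

lemma exists_tendsto_occupation (p : S → PMF S) (x₀ : S) :
    ∃ (U : Ultrafilter ℕ) (f : S → ℝ≥0∞), (U : Filter ℕ) ≤ atTop ∧
      ∀ x, Tendsto (fun n => occupation p x₀ n x) U (𝓝 (f x)) := by
  obtain ⟨f, -, hf⟩ := isCompact_univ.ultrafilter_le_nhds
    ((hyperfilter ℕ).map (occupation p x₀)) (by simp only [principal_univ, le_top])
  exact ⟨hyperfilter ℕ, f, Nat.hyperfilter_le_atTop, tendsto_pi_nhds.1 hf⟩

section OccupationLimit

variable {x₀ : S} {l : Filter ℕ} [l.NeBot] {f : S → ℝ≥0∞}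

lemma tsum_le_one_of_tendsto_occupation
    (hf : ∀ x, Tendsto (fun n => occupation p x₀ n x) l (𝓝 (f x))) : ∑' x, f x ≤ 1 :=
  ENNReal.summable.tsum_le_of_sum_le fun G =>
    le_of_tendsto' (tendsto_finsetSum G fun x _ => hf x) fun n => sum_occupation_le_one p x₀ n G

lemma tsum_mul_kernel_le_of_tendsto_occupation (hl : l ≤ atTop)
    (hf : ∀ x, Tendsto (fun n => occupation p x₀ n x) l (𝓝 (f x))) (y : S) :
    ∑' x, f x * p x y ≤ f y := by
  refine ENNReal.summable.tsum_le_of_sum_le fun G => ?_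
  have hleft : Tendsto (fun n => ∑ x ∈ G, occupation p x₀ n x * p x y) l
      (𝓝 (∑ x ∈ G, f x * p x y)) :=
    tendsto_finsetSum G fun x _ => ENNReal.Tendsto.mul_const (hf x) (.inr ((p x).apply_ne_top y))
  have hright := (hf y).add (ENNReal.tendsto_inv_nat_nhds_zero.mono_left hl)
  rw [add_zero] at hright
  exact le_of_tendsto_of_tendsto' hleft hright fun n =>
    (ENNReal.sum_le_tsum G).trans (tsum_occupation_mul_kernel_le p x₀ n y)

lemma le_sum_mul_of_tendsto_occupation {V : S → ℝ≥0∞} {F : Finset S} {ε C : ℝ≥0∞} (hl : l ≤ atTop)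
    (hf : ∀ x, Tendsto (fun n => occupation p x₀ n x) l (𝓝 (f x))) (hV : V x₀ ≠ ∞) (hC : C ≠ ∞)
    (hdrift : ∀ x, ∑' y, p x y * V y + ε ≤ V x + (F : Set S).indicator (fun _ => C) x) :
    ε ≤ (∑ x ∈ F, f x) * C := by
  have hright := (ENNReal.Tendsto.mul_const (ENNReal.tendsto_inv_nat_nhds_zero.mono_left hl)
    (.inr hV)).add (ENNReal.Tendsto.mul_const (tendsto_finsetSum F fun x _ => hf x) (.inr hC))
  rw [zero_mul, zero_add] at hright
  refine ge_of_tendsto hright ?_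
  filter_upwards [hl (eventually_ne_atTop 0)] with n hn using le_sum_occupation hdrift x₀ hn

end OccupationLimit

lemma exists_stationary_of_drift {V : S → ℝ≥0∞} {F : Finset S} {ε C : ℝ≥0∞} {x₀ : S}
    (hV : V x₀ ≠ ∞) (hε : ε ≠ 0) (hC : C ≠ ∞)
    (hdrift : ∀ x, ∑' y, p x y * V y + ε ≤ V x + (F : Set S).indicator (fun _ => C) x) :
    ∃ f : S → ℝ≥0∞, ∑' x, f x ≠ 0 ∧ ∑' x, f x ≠ ∞ ∧ ∀ y, ∑' x, f x * p x y = f y := by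
  obtain ⟨U, f, hU, hf⟩ := exists_tendsto_occupation p x₀
  have sum_ne_top : ∑' x, f x ≠ ∞ :=
    ne_top_of_le_ne_top ENNReal.one_ne_top (tsum_le_one_of_tendsto_occupation hf)
  have le_mass : ε ≤ (∑ x ∈ F, f x) * C := le_sum_mul_of_tendsto_occupation hU hf hV hC hdrift
  have mass_ne_zero : ∑ x ∈ F, f x ≠ 0 := by
    intro h
    rw [h, zero_mul, nonpos_iff_eq_zero] at le_mass
    exact hε le_mass
  exact ⟨f, fun h => mass_ne_zero (le_zero_iff.1 (h ▸ ENNReal.sum_le_tsum F)), sum_ne_top,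
    tsum_mul_kernel_eq_of_le sum_ne_top (tsum_mul_kernel_le_of_tendsto_occupation hU hf)⟩

lemma exists_bind_eq_of_stationary {f : S → ℝ≥0∞} (h₀ : ∑' x, f x ≠ 0) (h₁ : ∑' x, f x ≠ ∞)
    (hf : ∀ y, ∑' x, f x * p x y = f y) : ∃ π : PMF S, π.bind p = π := by
  refine ⟨PMF.normalize f h₀ h₁, PMF.ext fun y => ?_⟩
  simp only [PMF.bind_apply, PMF.normalize_apply, mul_right_comm _ _ (p _ y),
    ENNReal.tsum_mul_right, hf]

theorem exists_bind_eq_of_foster [Nonempty S] {V : S → ℝ≥0} {F : Finset S} {ε : ℝ≥0}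
    (hε : ε ≠ 0) (hF : ∀ x ∈ F, ∑' y, p x y * V y ≠ ∞)
    (hdrift : ∀ x ∉ F, ∑' y, p x y * V y + ε ≤ V x) : ∃ π : PMF S, π.bind p = π := by
  obtain ⟨x₀⟩ := ‹Nonempty S›
  set C : ℝ≥0∞ := ∑ x ∈ F, (∑' y, p x y * V y + ε)
  have hC : C ≠ ∞ :=
    ENNReal.sum_ne_top.2 fun x hx => ENNReal.add_ne_top.2 ⟨hF x hx, ENNReal.coe_ne_top⟩
  have hdriftC (x : S) :
      ∑' y, p x y * V y + ε ≤ V x + (F : Set S).indicator (fun _ => C) x := by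
    by_cases hx : x ∈ F
    · rw [Set.indicator_of_mem (Finset.mem_coe.2 hx)]
      exact (Finset.single_le_sum_of_canonicallyOrdered
        (f := fun x => ∑' y, p x y * V y + ε) hx).trans le_add_self
    · rw [Set.indicator_of_notMem (by simpa using hx), add_zero]
      exact hdrift x hx
  obtain ⟨f, h₀, h₁, hf⟩ := exists_stationary_of_drift (x₀ := x₀) ENNReal.coe_ne_top
    (ENNReal.coe_ne_zero.2 hε) hC hdriftC
  exact exists_bind_eq_of_stationary h₀ h₁ hf

end FosterCriterion

section JumpRates

variable {S : Type*} {q : S → S → ℝ≥0∞} {Λ : ℝ≥0}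

/-- The balance equations of the continuous-time chain which jumps from `x` to `y` at rate
`q x y`: the flow into each state equals the flow out of it. -/
def IsBalanced (q : S → S → ℝ≥0∞) (π : PMF S) : Prop :=
  ∀ y, ∑' x, π x * q x y = π y * ∑' z, q y z

open Classical in
/-- The uniformization at rate `Λ` of a continuous-time chain whose exit rates are at most `Λ`:
the chain is observed at the points of a Poisson process of rate `Λ`, so that the state stays put
with the probability left over by the jumps. -/
noncomputable def uniformization (q : S → S → ℝ≥0∞) (Λ : ℝ≥0) (hΛ : Λ ≠ 0)
    (hq : ∀ x, ∑' y, q x y ≤ Λ) (x : S) : PMF S :=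
  ⟨fun y => (Λ : ℝ≥0∞)⁻¹ * (q x y + if y = x then Λ - ∑' z, q x z else 0), by
    refine ENNReal.summable.hasSum_iff.2 ?_
    rw [ENNReal.tsum_mul_left, ENNReal.tsum_add, tsum_ite_eq, add_tsub_cancel_of_le (hq x),
      ENNReal.inv_mul_cancel (ENNReal.coe_ne_zero.2 hΛ) ENNReal.coe_ne_top]⟩

variable {hΛ : Λ ≠ 0} {hq : ∀ x, ∑' y, q x y ≤ Λ}

open Classical in
lemma mul_uniformization_apply (x y : S) :
    Λ * uniformization q Λ hΛ hq x y = q x y + if y = x then Λ - ∑' z, q x z else 0 :=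
  ENNReal.mul_inv_cancel_left (ENNReal.coe_ne_zero.2 hΛ) ENNReal.coe_ne_top

lemma mul_tsum_uniformization_mul (x : S) (V : S → ℝ≥0∞) :
    Λ * ∑' y, uniformization q Λ hΛ hq x y * V y =
      ∑' y, q x y * V y + (Λ - ∑' z, q x z) * V x := by
  classical
  simp only [← ENNReal.tsum_mul_left, ← mul_assoc, mul_uniformization_apply, add_mul,
    ENNReal.tsum_add, ite_mul, zero_mul, tsum_ite_eq]

lemma mul_bind_uniformization_apply (π : PMF S) (y : S) :
    Λ * π.bind (uniformization q Λ hΛ hq) y =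
      ∑' x, π x * q x y + π y * (Λ - ∑' z, q y z) := by
  classical
  simp only [PMF.bind_apply, ← ENNReal.tsum_mul_left, mul_left_comm (Λ : ℝ≥0∞),
    mul_uniformization_apply, mul_add, ENNReal.tsum_add, mul_ite, mul_zero, eq_comm (a := y),
    tsum_ite_eq]

lemma bind_uniformization_eq_iff {π : PMF S} :
    π.bind (uniformization q Λ hΛ hq) = π ↔ IsBalanced q π := by
  rw [PMF.ext_iff]
  refine forall_congr' fun y => ?_
  have hstay : π y * (Λ - ∑' z, q y z) ≠ ∞ :=
    ENNReal.mul_ne_top (π.apply_ne_top y) (ENNReal.sub_ne_top ENNReal.coe_ne_top)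
  have hsplit : Λ * π y = π y * ∑' z, q y z + π y * (Λ - ∑' z, q y z) := by
    rw [← mul_add, add_tsub_cancel_of_le (hq y), mul_comm]
  rw [← ENNReal.mul_right_inj (ENNReal.coe_ne_zero.2 hΛ) ENNReal.coe_ne_top,
    mul_bind_uniformization_apply, hsplit, ENNReal.add_left_inj hstay]

lemma IsIrreducibleRate.uniformization (hirr : IsIrreducibleRate q) :
    IsIrreducibleRate fun x y => uniformization q Λ hΛ hq x y := by
  intro x y
  refine ReflTransGen.mono (fun u v huv => ?_) x y (hirr x y)
  have hpos : Λ * _root_.uniformization q Λ hΛ hq u v ≠ 0 := by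
    rw [mul_uniformization_apply]
    exact (add_pos_of_pos_of_nonneg (pos_iff_ne_zero.2 huv) zero_le).ne'
  exact right_ne_zero_of_mul hpos

theorem exists_isBalanced_of_foster [Nonempty S] (hΛ : Λ ≠ 0) (hq : ∀ x, ∑' y, q x y ≤ Λ)
    {V : S → ℝ≥0} {F : Finset S} {ε : ℝ≥0} (hε : ε ≠ 0) (hF : ∀ x ∈ F, ∑' y, q x y * V y ≠ ∞)
    (hdrift : ∀ x ∉ F, ∑' y, q x y * V y + ε ≤ (∑' y, q x y) * V x) :
    ∃ π : PMF S, IsBalanced q π := by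
  have hΛ₀ : (Λ : ℝ≥0∞) ≠ 0 := ENNReal.coe_ne_zero.2 hΛ
  set p : S → PMF S := uniformization q Λ hΛ hq
  have hmul (x : S) : Λ * ∑' y, p x y * V y = ∑' y, q x y * V y + (Λ - ∑' z, q x z) * V x :=
    mul_tsum_uniformization_mul x fun y => V y
  have p_ne_top : ∀ x ∈ F, ∑' y, p x y * V y ≠ ∞ := by
    intro x hx htop
    have hstay : (Λ - ∑' z, q x z) * V x ≠ ∞ :=
      ENNReal.mul_ne_top (ENNReal.sub_ne_top ENNReal.coe_ne_top) ENNReal.coe_ne_top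
    refine ENNReal.add_ne_top.2 ⟨hF x hx, hstay⟩ ?_
    rw [← hmul, htop, ENNReal.mul_top hΛ₀]
  have p_drift : ∀ x ∉ F, ∑' y, p x y * V y + (ε / Λ : ℝ≥0) ≤ V x := by
    intro x hx
    rw [← ENNReal.mul_le_mul_iff_right hΛ₀ ENNReal.coe_ne_top]
    calc Λ * (∑' y, p x y * V y + (ε / Λ : ℝ≥0))
        = (∑' y, q x y * V y + ε) + (Λ - ∑' z, q x z) * V x := by
          rw [mul_add, hmul, ← ENNReal.coe_mul, mul_div_cancel₀ ε hΛ, add_right_comm]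
      _ ≤ (∑' y, q x y) * V x + (Λ - ∑' z, q x z) * V x := by gcongr; exact hdrift x hx
      _ = Λ * V x := by rw [← add_mul, add_tsub_cancel_of_le (hq x)]
  obtain ⟨π, hπ⟩ := exists_bind_eq_of_foster (div_ne_zero hε hΛ) p_ne_top p_drift
  exact ⟨π, bind_uniformization_eq_iff.1 hπ⟩

theorem IsBalanced.eq (hirr : IsIrreducibleRate q) (hΛ : Λ ≠ 0) (hq : ∀ x, ∑' y, q x y ≤ Λ)
    {π ρ : PMF S} (hπ : IsBalanced q π) (hρ : IsBalanced q ρ) : π = ρ :=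
  eq_of_bind_eq (hirr.uniformization (hΛ := hΛ) (hq := hq)) (bind_uniformization_eq_iff.2 hπ)
    (bind_uniformization_eq_iff.2 hρ)

end JumpRates

section QuadrantWalk

/-- The rate at which the nearest-neighbour walk on `ℕ × ℕ` jumps from `x` to `y`: arrivals occur
at rates `a` and `b`, and a nonempty queue is served at a rate `r` or `s` which depends on the
length of the other queue. -/
noncomputable def quadrantRate (a b : ℝ≥0) (r s : ℕ → ℝ≥0) (x y : ℕ × ℕ) : ℝ≥0∞ :=
  (if y = (x.1 + 1, x.2) then (a : ℝ≥0∞) else 0) + (if y = (x.1, x.2 + 1) then (b : ℝ≥0∞) else 0) +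
    (if x = (y.1 + 1, y.2) then (r y.2 : ℝ≥0∞) else 0) +
    (if x = (y.1, y.2 + 1) then (s y.1 : ℝ≥0∞) else 0)

lemma tsum_ite_eq_succ_fst (f : ℕ × ℕ → ℝ≥0∞) (y : ℕ × ℕ) :
    ∑' x : ℕ × ℕ, (if y = (x.1 + 1, x.2) then f x else 0) =
      if 0 < y.1 then f (y.1 - 1, y.2) else 0 := by
  obtain ⟨_ | i, j⟩ := y
  · simp
  · have hiff (x : ℕ × ℕ) : (i + 1, j) = (x.1 + 1, x.2) ↔ x = (i, j) := by grind
    simp [hiff]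

lemma tsum_ite_eq_succ_snd (f : ℕ × ℕ → ℝ≥0∞) (y : ℕ × ℕ) :
    ∑' x : ℕ × ℕ, (if y = (x.1, x.2 + 1) then f x else 0) =
      if 0 < y.2 then f (y.1, y.2 - 1) else 0 := by
  obtain ⟨i, _ | j⟩ := y
  · simp
  · have hiff (x : ℕ × ℕ) : (i, j + 1) = (x.1, x.2 + 1) ↔ x = (i, j) := by grind
    simp [hiff]

variable {a b : ℝ≥0} {r s : ℕ → ℝ≥0}

lemma tsum_quadrantRate_mul (V : ℕ × ℕ → ℝ≥0∞) (x : ℕ × ℕ) :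
    ∑' y, quadrantRate a b r s x y * V y =
      a * V (x.1 + 1, x.2) + b * V (x.1, x.2 + 1) +
      (if 0 < x.1 then r x.2 * V (x.1 - 1, x.2) else 0) +
      (if 0 < x.2 then s x.1 * V (x.1, x.2 - 1) else 0) := by
  simp only [quadrantRate, add_mul, ite_mul, zero_mul, ENNReal.tsum_add, tsum_ite_eq,
    tsum_ite_eq_succ_fst fun y => r y.2 * V y, tsum_ite_eq_succ_snd fun y => s y.1 * V y]

lemma tsum_quadrantRate (x : ℕ × ℕ) :
    ∑' y, quadrantRate a b r s x y =
      a + b + (if 0 < x.1 then (r x.2 : ℝ≥0∞) else 0) +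
        (if 0 < x.2 then (s x.1 : ℝ≥0∞) else 0) := by
  simpa only [mul_one] using tsum_quadrantRate_mul (fun _ => 1) x

lemma tsum_mul_quadrantRate (f : ℕ × ℕ → ℝ≥0∞) (y : ℕ × ℕ) :
    ∑' x, f x * quadrantRate a b r s x y =
      (if 0 < y.1 then f (y.1 - 1, y.2) * a else 0) +
      (if 0 < y.2 then f (y.1, y.2 - 1) * b else 0) +
      f (y.1 + 1, y.2) * r y.2 + f (y.1, y.2 + 1) * s y.1 := by
  simp only [quadrantRate, mul_add, mul_ite, mul_zero, ENNReal.tsum_add, tsum_ite_eq,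
    tsum_ite_eq_succ_fst fun x => f x * a, tsum_ite_eq_succ_snd fun x => f x * b]

lemma tsum_quadrantRate_le {R₁ R₂ : ℝ≥0} (hr : ∀ n, r n ≤ R₁) (hs : ∀ n, s n ≤ R₂) (x : ℕ × ℕ) :
    ∑' y, quadrantRate a b r s x y ≤ (a + b + R₁ + R₂ : ℝ≥0) := by
  rw [tsum_quadrantRate]
  push_cast
  gcongr
  · split_ifs
    exacts [ENNReal.coe_le_coe.2 (hr _), zero_le]
  · split_ifs
    exacts [ENNReal.coe_le_coe.2 (hs _), zero_le]

lemma isIrreducibleRate_quadrantRate (ha : a ≠ 0) (hb : b ≠ 0) (hr : ∀ n, r n ≠ 0)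
    (hs : ∀ n, s n ≠ 0) : IsIrreducibleRate (quadrantRate a b r s) := by
  have to_zero (i j : ℕ) :
      ReflTransGen (fun u v => quadrantRate a b r s u v ≠ 0) (i, j) (0, 0) := by
    induction i with
    | succ i ih => exact .head (by simp [quadrantRate, hr]) ih
    | zero =>
      induction j with
      | succ j ih => exact .head (by simp [quadrantRate, hs]) ih
      | zero => exact .refl
  have from_zero (i j : ℕ) :
      ReflTransGen (fun u v => quadrantRate a b r s u v ≠ 0) (0, 0) (i, j) := by
    induction i with
    | succ i ih => exact ih.tail (by simp [quadrantRate, ha])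
    | zero =>
      induction j with
      | succ j ih => exact ih.tail (by simp [quadrantRate, hb])
      | zero => exact .refl
  exact fun x y => (to_zero x.1 x.2).trans (from_zero y.1 y.2)

theorem eq_of_isBalanced_quadrantRate (ha : a ≠ 0) (hb : b ≠ 0) (hr : ∀ n, r n ≠ 0)
    (hs : ∀ n, s n ≠ 0) {R₁ R₂ : ℝ≥0} (hrR : ∀ n, r n ≤ R₁) (hsR : ∀ n, s n ≤ R₂)
    {π ρ : PMF (ℕ × ℕ)} (hπ : IsBalanced (quadrantRate a b r s) π)
    (hρ : IsBalanced (quadrantRate a b r s) ρ) : π = ρ :=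
  hπ.eq (isIrreducibleRate_quadrantRate ha hb hr hs) (by positivity)
    (tsum_quadrantRate_le hrR hsR) hρ

end QuadrantWalk

section QuadraticDrift

/-- The service rate of a queue while the other queue has length `n`: the own server works at rate
`c`, and the other server adds `d` when it idles. -/
def sharedRate (c d : ℝ≥0) (n : ℕ) : ℝ≥0 := c + d * if n = 0 then 1 else 0

lemma sharedRate_le (c d : ℝ≥0) (n : ℕ) : sharedRate c d n ≤ c + d := by
  rw [sharedRate]
  gcongr
  exact mul_le_of_le_one_right' (by split_ifs <;> simp)

lemma sharedRate_ne_zero {c : ℝ≥0} (hc : c ≠ 0) (d : ℝ≥0) (n : ℕ) : sharedRate c d n ≠ 0 := by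
  simp [sharedRate, hc]

/-- The quadratic form with coefficients `α`, `β`, `γ`, as a Lyapunov function on `ℕ × ℕ`. -/
def quadraticLyapunov (α β γ : ℝ≥0) (m : ℕ × ℕ) : ℝ≥0 :=
  α * m.1 ^ 2 + 2 * β * m.1 * m.2 + γ * m.2 ^ 2

/-- For the walk with arrival rates `a`, `b` and service rates `sharedRate c₁ d₁`,
`sharedRate c₂ d₂`, the drift of `quadraticLyapunov α β γ` at `(m₁, m₂)` is affine in the interior
and on each axis. The coefficient of `m₁` is at most `-2 * ε` in the interior and on the axis
`m₂ = 0`, and that of `m₂` in the interior and on the axis `m₁ = 0`; the terms are arranged so that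
no subtraction occurs. -/
structure HasQuadraticDrift (a b c₁ c₂ d₁ d₂ α β γ ε : ℝ≥0) : Prop where
  interior_fst : α * a + β * b + ε ≤ α * c₁ + β * c₂
  interior_snd : β * a + γ * b + ε ≤ β * c₁ + γ * c₂
  axis_fst : α * a + β * b + ε ≤ α * (c₁ + d₁)
  axis_snd : β * a + γ * b + ε ≤ γ * (c₂ + d₂)

variable {a b c₁ c₂ d₁ d₂ α β γ ε : ℝ≥0}

lemma HasQuadraticDrift.swap (h : HasQuadraticDrift a b c₁ c₂ d₁ d₂ α β γ ε) :
    HasQuadraticDrift b a c₂ c₁ d₂ d₁ γ β α ε where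
  interior_fst := by linarith [h.interior_snd]
  interior_snd := by linarith [h.interior_fst]
  axis_fst := by linarith [h.axis_snd]
  axis_snd := by linarith [h.axis_fst]

lemma HasQuadraticDrift.tsum_mul_add_le (h : HasQuadraticDrift a b c₁ c₂ d₁ d₂ α β γ ε)
    (m : ℕ × ℕ) :
    ∑' y, quadrantRate a b (sharedRate c₁ d₁) (sharedRate c₂ d₂) m y * quadraticLyapunov α β γ y +
        (2 * ε * (m.1 + m.2) : ℝ≥0) ≤
      (∑' y, quadrantRate a b (sharedRate c₁ d₁) (sharedRate c₂ d₂) m y) *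
        quadraticLyapunov α β γ m + (α * (a + c₁ + d₁) + γ * (b + c₂ + d₂) : ℝ≥0) := by
  rw [tsum_quadrantRate_mul, tsum_quadrantRate]
  have hα : 0 ≤ α * c₁ ∧ 0 ≤ α * d₁ := ⟨zero_le, zero_le⟩
  have hγ : 0 ≤ γ * c₂ ∧ 0 ≤ γ * d₂ := ⟨zero_le, zero_le⟩
  obtain ⟨_ | i, _ | j⟩ := m <;>
    simp only [lt_irrefl, Nat.succ_pos, if_true, if_false, add_tsub_cancel_right, sharedRate,
      quadraticLyapunov, Nat.add_one_ne_zero] <;>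
    norm_cast <;>
    push_cast
  · linarith
  · linarith [mul_le_mul_right h.axis_snd (2 * ((j : ℝ≥0) + 1))]
  · linarith [mul_le_mul_right h.axis_fst (2 * ((i : ℝ≥0) + 1))]
  · linarith [mul_le_mul_right h.interior_fst (2 * ((i : ℝ≥0) + 1)),
      mul_le_mul_right h.interior_snd (2 * ((j : ℝ≥0) + 1))]

theorem HasQuadraticDrift.exists_isBalanced (h : HasQuadraticDrift a b c₁ c₂ d₁ d₂ α β γ ε)
    (hε : ε ≠ 0) :
    ∃ π : PMF (ℕ × ℕ),
      IsBalanced (quadrantRate a b (sharedRate c₁ d₁) (sharedRate c₂ d₂)) π := by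
  set K : ℝ≥0 := α * (a + c₁ + d₁) + γ * (b + c₂ + d₂)
  obtain ⟨N, hN⟩ := exists_nat_ge ((K + 1) / (2 * ε))
  rw [div_le_iff₀' (by positivity)] at hN
  have hcd : c₁ + d₁ ≠ 0 := by
    intro h₀
    have hle : ε ≤ 0 := le_add_self.trans (by simpa only [h₀, mul_zero] using h.axis_fst)
    exact hε (le_zero_iff.1 hle)
  have hΛ : a + b + (c₁ + d₁) + (c₂ + d₂) ≠ 0 := by positivity
  refine exists_isBalanced_of_foster (V := quadraticLyapunov α β γ)
    (F := Finset.range N ×ˢ Finset.range N) hΛ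
    (tsum_quadrantRate_le (sharedRate_le c₁ d₁) (sharedRate_le c₂ d₂)) one_ne_zero
    (fun m _ => ?_) fun m hm => ?_
  · rw [tsum_quadrantRate_mul]
    split_ifs <;> finiteness
  · have hmN : N ≤ m.1 + m.2 := by
      contrapose! hm
      simp only [Finset.mem_product, Finset.mem_range]
      lia
    have hK : (1 : ℝ≥0) + K ≤ 2 * ε * (m.1 + m.2) := by
      rw [add_comm]
      refine hN.trans ?_
      gcongr
      exact_mod_cast hmN
    rw [← ENNReal.add_le_add_iff_right (ENNReal.coe_ne_top (r := K)), add_assoc, ← ENNReal.coe_add]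
    exact (add_le_add_right (ENNReal.coe_le_coe.2 hK) _).trans (h.tsum_mul_add_le m)

/-- With `β = p` and `γ = 1` both bounds on the coefficient of `m₂` are the hypothesis `h`, and
`α` is then chosen so that `α * (c₁ - a) = p * b + ε`. -/
lemma exists_hasQuadraticDrift_of_overload {p : ℝ≥0} (h₂ : c₂ < b)
    (h : a * p + b < c₁ * p + c₂) :
    ∃ α β γ ε, ε ≠ 0 ∧ HasQuadraticDrift a b c₁ c₂ d₁ (p * c₁) α β γ ε := by
  have h₁ : a < c₁ := by
    by_contra! hle
    exact h.not_ge (add_le_add (mul_le_mul_left hle p) h₂.le)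
  obtain ⟨k, hk, rfl⟩ := exists_pos_add_of_lt' h₁
  obtain ⟨ε, hε, hsum⟩ := exists_pos_add_of_lt' h
  have hα : (p * b + ε) / k * k = p * b + ε := div_mul_cancel₀ _ hk.ne'
  refine ⟨(p * b + ε) / k, p, 1, ε, hε.ne', ⟨?_, ?_, ?_, ?_⟩⟩
  · linarith [(zero_le : 0 ≤ p * c₂)]
  · linarith
  · linarith [(zero_le : 0 ≤ (p * b + ε) / k * d₁)]
  · linarith

lemma exists_hasQuadraticDrift_of_lt (h₁ : a < c₁) (h₂ : b < c₂) :
    ∃ α β γ ε, ε ≠ 0 ∧ HasQuadraticDrift a b c₁ c₂ d₁ d₂ α β γ ε := by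
  obtain ⟨k₁, hk₁, rfl⟩ := exists_pos_add_of_lt' h₁
  obtain ⟨k₂, hk₂, rfl⟩ := exists_pos_add_of_lt' h₂
  have hα : k₁⁻¹ * k₁ = 1 := inv_mul_cancel₀ hk₁.ne'
  have hγ : k₂⁻¹ * k₂ = 1 := inv_mul_cancel₀ hk₂.ne'
  refine ⟨k₁⁻¹, 0, k₂⁻¹, 1, one_ne_zero, ⟨?_, ?_, ?_, ?_⟩⟩
  · linarith
  · linarith
  · linarith [(zero_le : 0 ≤ k₁⁻¹ * d₁)]
  · linarith [(zero_le : 0 ≤ k₂⁻¹ * d₂)]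

lemma exists_hasQuadraticDrift {p₁ p₂ : ℝ≥0}
    (h : (c₂ < b ∧ a * p₁ + b < c₁ * p₁ + c₂) ∨ (c₁ < a ∧ a + b * p₂ < c₁ + c₂ * p₂) ∨
      (a < c₁ ∧ b < c₂)) :
    ∃ α β γ ε, ε ≠ 0 ∧ HasQuadraticDrift a b c₁ c₂ (p₂ * c₂) (p₁ * c₁) α β γ ε := by
  rcases h with ⟨h₂, h⟩ | ⟨h₁, h⟩ | ⟨h₁, h₂⟩
  · exact exists_hasQuadraticDrift_of_overload h₂ h
  · rw [add_comm a, add_comm c₁] at h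
    obtain ⟨α, β, γ, ε, hε, hdrift⟩ :=
      exists_hasQuadraticDrift_of_overload (d₁ := p₁ * c₁) h₁ h
    exact ⟨γ, β, α, ε, hε, hdrift.swap⟩
  · exact exists_hasQuadraticDrift_of_lt h₁ h₂

end QuadraticDrift

section InvariantDistribution

lemma exists_pmf_toReal_eq {S : Type*} {π : S → ℝ} (h₀ : ∀ x, 0 ≤ π x) (h₁ : ∑' x, π x = 1) :
    ∃ ϖ : PMF S, (fun x => (ϖ x).toReal) = π := by
  have hsum : Summable π := by
    by_contra h
    rw [tsum_eq_zero_of_not_summable h] at h₁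
    exact zero_ne_one h₁
  refine ⟨⟨fun x => ENNReal.ofReal (π x), ?_⟩, funext fun x => ENNReal.toReal_ofReal (h₀ x)⟩
  refine ENNReal.summable.hasSum_iff.2 ?_
  rw [← ENNReal.ofReal_tsum_of_nonneg h₀ hsum, h₁, ENNReal.ofReal_one]

lemma isInvariantDist_toReal_iff {la1 la2 mu1 mu2 l1 l2 p1 p2 : ℝ≥0} {ϖ : PMF (ℕ × ℕ)} :
    IsInvariantDist la1 la2 mu1 mu2 l1 l2 p1 p2 (fun m => (ϖ m).toReal) ↔
      IsBalanced (quadrantRate (mu1 * l1) (mu2 * l2) (sharedRate la1 (p2 * la2))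
        (sharedRate la2 (p1 * la1))) ϖ := by
  have tsum_toReal : ∑' m, (ϖ m).toReal = 1 := by
    rw [← ENNReal.tsum_toReal_eq ϖ.apply_ne_top, ϖ.tsum_coe, ENNReal.toReal_one]
  obtain ⟨f, hf⟩ : ∃ f : ℕ × ℕ → ℝ≥0, ∀ m, ϖ m = f m :=
    ⟨fun m => (ϖ m).toNNReal, fun m => (ENNReal.coe_toNNReal (ϖ.apply_ne_top m)).symm⟩
  simp only [IsInvariantDist, ENNReal.toReal_nonneg, implies_true, tsum_toReal, true_and,
    IsBalanced, Prod.forall]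
  refine forall₂_congr fun i j => ?_
  simp only [tsum_mul_quadrantRate, tsum_quadrantRate, sharedRate, hf, ENNReal.coe_toReal]
  rw [eq_comm]
  rcases i with _ | i <;> rcases j with _ | j <;>
    simp only [lt_irrefl, Nat.succ_pos, Nat.add_one_ne_zero, if_true, if_false] <;>
    norm_cast <;>
    constructor <;> intro h <;> linarith

end InvariantDistribution

theorem stmt18_general (la1 la2 mu1 mu2 p1 p2 l1 l2 : ℝ)
    (hla1 : 0 < la1) (hla2 : 0 < la2) (hmu1 : 0 < mu1) (hmu2 : 0 < mu2)
    (hp1 : 0 ≤ p1) (hp2 : 0 ≤ p2) (hl1 : 0 < l1) (hl2 : 0 < l2)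
    (hcond : (la2 < mu2 * l2 ∧ mu1 * l1 * p1 + mu2 * l2 < la1 * p1 + la2)
      ∨ (la1 < mu1 * l1 ∧ mu1 * l1 + mu2 * l2 * p2 < la1 + la2 * p2)
      ∨ (mu1 * l1 < la1 ∧ mu2 * l2 < la2)) :
    ∃! π : ℕ × ℕ → ℝ, IsInvariantDist la1 la2 mu1 mu2 l1 l2 p1 p2 π := by
  lift la1 to ℝ≥0 using hla1.le
  lift la2 to ℝ≥0 using hla2.le
  lift mu1 to ℝ≥0 using hmu1.le
  lift mu2 to ℝ≥0 using hmu2.le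
  lift l1 to ℝ≥0 using hl1.le
  lift l2 to ℝ≥0 using hl2.le
  lift p1 to ℝ≥0 using hp1
  lift p2 to ℝ≥0 using hp2
  norm_cast at hla1 hla2 hmu1 hmu2 hl1 hl2 hcond
  obtain ⟨α, β, γ, ε, hε, hdrift⟩ := exists_hasQuadraticDrift hcond
  obtain ⟨π, hπ⟩ := hdrift.exists_isBalanced hε
  refine ⟨fun m => (π m).toReal, isInvariantDist_toReal_iff.2 hπ, fun ρ hρ => ?_⟩
  obtain ⟨ϖ, rfl⟩ := exists_pmf_toReal_eq hρ.1 hρ.2.1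
  rw [isInvariantDist_toReal_iff] at hρ
  rw [eq_of_isBalanced_quadrantRate (by positivity) (by positivity)
    (sharedRate_ne_zero hla1.ne' _) (sharedRate_ne_zero hla2.ne' _)
    (sharedRate_le _ _) (sharedRate_le _ _) hρ hπ]

theorem stmt18 (la1 la2 mu1 mu2 p1 p2 l1 l2 : ℝ)
    (hla1 : 0 < la1) (hla2 : 0 < la2) (hmu1 : 0 < mu1) (hmu2 : 0 < mu2)
    (hp1 : 0 ≤ p1) (hp1' : p1 ≤ 1) (hp2 : 0 ≤ p2) (hp2' : p2 ≤ 1)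
    (hl1 : 0 < l1) (hl2 : 0 < l2)
    (hcond : (la2 < mu2 * l2 ∧ mu1 * l1 * p1 + mu2 * l2 < la1 * p1 + la2)
      ∨ (la1 < mu1 * l1 ∧ mu1 * l1 + mu2 * l2 * p2 < la1 + la2 * p2)
      ∨ (mu1 * l1 < la1 ∧ mu2 * l2 < la2)) :
    ∃! π : ℕ × ℕ → ℝ, IsInvariantDist la1 la2 mu1 mu2 l1 l2 p1 p2 π := by
  exact stmt18_general la1 la2 mu1 mu2 p1 p2 l1 l2 hla1 hla2 hmu1 hmu2 hp1 hp2 hl1 hl2 hcond
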